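/- There do not exist positive integers a, b, c with gcd(a,b,c) = 1 and a squarefree integer M > 1 such that a²+b²+c² is a perfect square and each of a²+b², a²+c², b²+c² is M times a perfect square. (In cuboid terms: no 3-BPC exists whose three non-integer inter-vertex distances are the three face diagonals.) -/

import Mathlib

/-!
Let `p` be a prime factor of `M`. Adding the three face equations shows `p ∣ 2d²`, where
`d² = a² + b² + c²`. If `p` is odd, then `p ∣ d²`, and each squared edge, being `d²` minus a
squared face diagonal, is divisible by `p`; this contradicts `gcd(a, b, c) = 1`. If `p = 2`, the
edges all have the same parity; they are not all even by coprimality, and if they are all odd,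
then `d² ≡ 3 (mod 4)`, which is impossible.
-/

/-- No 3-BPC exists whose three non-integer inter-vertex distances are the three face
diagonals: there are no positive integers `a, b, c` with `gcd(a,b,c) = 1` and squarefree
`M > 1` such that `a²+b²+c²` is a perfect square and each of `a²+b²`, `a²+c²`, `b²+c²`
is `M` times a perfect square. -/
theorem no_three_BPC_with_all_face_diagonals :
    ¬ ∃ a b c M : ℕ, 0 < a ∧ 0 < b ∧ 0 < c ∧ Nat.gcd a (Nat.gcd b c) = 1 ∧
      Squarefree M ∧ 1 < M ∧ IsSquare (a ^ 2 + b ^ 2 + c ^ 2) ∧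
      (∃ x : ℕ, a ^ 2 + b ^ 2 = M * x ^ 2) ∧
      (∃ y : ℕ, a ^ 2 + c ^ 2 = M * y ^ 2) ∧
      (∃ z : ℕ, b ^ 2 + c ^ 2 = M * z ^ 2) := by
  rintro ⟨a, b, c, M, -, -, -, hg, -, hM, ⟨d, hd⟩, ⟨x, hx⟩, ⟨y, hy⟩, ⟨z, hz⟩⟩
  obtain ⟨p, hp, hpM⟩ := Nat.exists_prime_and_dvd hM.ne'
  have hab : p ∣ a ^ 2 + b ^ 2 := hx ▸ hpM.mul_right _
  have hac : p ∣ a ^ 2 + c ^ 2 := hy ▸ hpM.mul_right _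
  have hbc : p ∣ b ^ 2 + c ^ 2 := hz ▸ hpM.mul_right _
  have not_all : ¬ (p ∣ a ∧ p ∣ b ∧ p ∣ c) := fun ⟨ha, hb, hc⟩ =>
    hp.one_lt.ne' (Nat.dvd_one.mp (hg ▸ Nat.dvd_gcd ha (Nat.dvd_gcd hb hc)))
  rcases hp.eq_two_or_odd' with rfl | hodd
  · have key : ∀ n : ℕ, n % 2 = 0 ∧ n ^ 2 % 4 = 0 ∨ n % 2 = 1 ∧ n ^ 2 % 4 = 1 := by
      intro n
      have h4 : n % 4 < 4 := Nat.mod_lt _ (by norm_num)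
      rw [Nat.pow_mod]
      interval_cases h : n % 4 <;> omega
    have ha := key a
    have hb := key b
    have hc := key c
    have hdd := key d
    rw [← sq] at hd
    omega
  · have hsum : p ∣ 2 * (a ^ 2 + b ^ 2 + c ^ 2) := by
      have h := dvd_add (dvd_add hab hac) hbc
      ring_nf at h ⊢
      exact h
    have hcop : Nat.Coprime p 2 := Nat.coprime_two_right.mpr hodd
    have hS : p ∣ a ^ 2 + b ^ 2 + c ^ 2 := hcop.dvd_of_dvd_mul_left hsum
    have hc : p ∣ c ^ 2 := (Nat.dvd_add_right hab).mp hS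
    have hb : p ∣ b ^ 2 := (Nat.dvd_add_left hc).mp hbc
    have ha : p ∣ a ^ 2 := (Nat.dvd_add_left hc).mp hac
    exact not_all ⟨hp.dvd_of_dvd_pow ha, hp.dvd_of_dvd_pow hb, hp.dvd_of_dvd_pow hc⟩
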